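/- Converse part of Theorem 1 (covert multi-bit watermarking capacity with non-causal state). Let S, X be finite sets, P_S a pmf on S, and P_{X|S} a conditional pmf. For each n, consider a code consisting of: a message set M_n, a key set K_n, an arbitrary stochastic encoder producing X^n ∈ X^n from (S^n, M, K) where S^n ~ P_S^{⊗n}, M is uniform on M_n, and K is uniform on K_n and independent of (M, S^n), and a decoder g_n : X^n × K_n → M_n. Suppose the error probabilities δ_n = P(g_n(X^n, K) ≠ M) satisfy δ_n → 0 and the covertness deviations σ_n = max_m V(P̃^m_{X^n S^n}, (P_{X|S} P_S)^{⊗n}) satisfy σ_n → 0, where P̃^m_{X^n S^n} is the joint pmf of (X^n, S^n) conditioned on M = m. Then limsup_{n→∞} (1/n) log₂ |M_n| ≤ sup { I(U;X) − I(U;S) }, where the supremum is over all finite sets U and all conditional pmfs P_{U|S}, W_{X|U,S} satisfying Σ_u P_{U|S}(u|s) W_{X|U,S}(x|u,s) = P_{X|S}(x|s) for all x and all s with P_S(s) > 0, and the information quantities are computed under the joint pmf P_S · P_{U|S} · W_{X|U,S}. -/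

import Mathlib

open Finset Filter Real

noncomputable section

open scoped Classical

/-- Pushforward of a mass function along a map. -/
def pushf {α β : Type*} [Fintype α] (p : α → ℝ) (f : α → β) : β → ℝ :=
  fun b => ∑ a, if f a = b then p a else 0

/-- Shannon entropy (in bits) of a mass function on a finite type,
with the convention `0 * logb 2 0 = 0`. -/
def ent {α : Type*} [Fintype α] (p : α → ℝ) : ℝ := -∑ a, p a * Real.logb 2 (p a)

/-- Shannon entropy (in bits) of a random variable `f` under the mass function `p`. -/
def entRV {α β : Type*} [Fintype α] [Fintype β] (p : α → ℝ) (f : α → β) : ℝ :=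
  ent (pushf p f)

/-- Mutual information `I(f; g)` (in bits) under the mass function `p`. -/
def mi {α β γ : Type*} [Fintype α] [Fintype β] [Fintype γ]
    (p : α → ℝ) (f : α → β) (g : α → γ) : ℝ :=
  entRV p f + entRV p g - entRV p (fun a => (f a, g a))

/-- Conditional mutual information `I(f; g | h)` (in bits) under the mass function `p`. -/
def cmi {α β γ δ : Type*} [Fintype α] [Fintype β] [Fintype γ] [Fintype δ]
    (p : α → ℝ) (f : α → β) (g : α → γ) (h : α → δ) : ℝ :=
  entRV p (fun a => (f a, h a)) + entRV p (fun a => (g a, h a))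
    - entRV p (fun a => (f a, g a, h a)) - entRV p h

/-- Conditional entropy `H(f | g)` (in bits) under the mass function `p`. -/
def condEnt {α β γ : Type*} [Fintype α] [Fintype β] [Fintype γ]
    (p : α → ℝ) (f : α → β) (g : α → γ) : ℝ :=
  entRV p (fun a => (f a, g a)) - entRV p g

/-- Total variation distance between two mass functions on a finite type. -/
def TV {α : Type*} [Fintype α] (p q : α → ℝ) : ℝ := (∑ a, |p a - q a|) / 2

/-- The binary entropy function (in bits), with `h2 0 = h2 1 = 0`. -/
def h2 (t : ℝ) : ℝ := -(t * Real.logb 2 t) - (1 - t) * Real.logb 2 (1 - t)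

/-!
Rerouting part of the encoder's output makes the law of `(Xⁿ, Sⁿ)` exactly i.i.d.: by a maximal
coupling, run for each state sequence on the output law averaged over messages and keys, this
changes the joint law of the code, and hence its error probability, by at most the covertness
deviation. For the rerouted code the Gel'fand–Pinsker converse applies with
`Uₜ = (M, K, X₁, …, Xₜ₋₁, Sₜ₊₁, …, Sₙ)`: since each letter `(Xₜ, Sₜ)` now has exactly the base law,
every term `I(Uₜ;Xₜ) − I(Uₜ;Sₜ)` lies in the set whose supremum bounds the rate.
-/

/-! ### Pushforwards -/

section Pushforward

variable {α β γ : Type*} [Fintype α]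

lemma pushf_apply (p : α → ℝ) (f : α → β) (b : β) :
    pushf p f b = ∑ a, p a * if f a = b then 1 else 0 := by
  simp only [pushf, mul_ite, mul_one, mul_zero]

lemma pushf_equiv (p : α → ℝ) (e : α ≃ β) : pushf p e = fun b => p (e.symm b) := by
  funext b
  simp [pushf, ← e.eq_symm_apply]

lemma pushf_nonneg {p : α → ℝ} (hp : ∀ a, 0 ≤ p a) (f : α → β) (b : β) : 0 ≤ pushf p f b :=
  sum_nonneg fun a _ => by split_ifs <;> simp [hp]

lemma le_pushf {p : α → ℝ} (hp : ∀ a, 0 ≤ p a) (f : α → β) (a : α) : p a ≤ pushf p f (f a) := by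
  calc p a = if f a = f a then p a else 0 := (if_pos rfl).symm
    _ ≤ pushf p f (f a) := single_le_sum (f := fun c => if f c = f a then p c else 0)
        (fun c _ => by split_ifs <;> simp [hp]) (mem_univ a)

lemma pushf_pos {p : α → ℝ} (hp : ∀ a, 0 ≤ p a) (f : α → β) {a : α} (ha : p a ≠ 0) :
    0 < pushf p f (f a) :=
  ((hp a).lt_of_ne' ha).trans_le (le_pushf hp f a)

lemma exists_ne_zero_of_pushf_ne_zero {p : α → ℝ} {f : α → β} {b : β} (hb : pushf p f b ≠ 0) :
    ∃ a, f a = b ∧ p a ≠ 0 := by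
  obtain ⟨a, -, ha⟩ := exists_ne_zero_of_sum_ne_zero hb
  exact ⟨a, by simpa using ha⟩

lemma sum_pushf_pair_right [Fintype γ] (p : α → ℝ) (f : α → β) (g : α → γ) (b : β) :
    ∑ c, pushf p (fun a => (f a, g a)) (b, c) = pushf p f b := by
  simp_rw [pushf]
  rw [sum_comm]
  simp [Prod.ext_iff, ite_and]

variable [Fintype β]

lemma sum_pushf_pair_left (p : α → ℝ) (f : α → β) (g : α → γ) (c : γ) :
    ∑ b, pushf p (fun a => (f a, g a)) (b, c) = pushf p g c := by
  simp_rw [pushf]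
  rw [sum_comm]
  simp [Prod.ext_iff, ite_and]

lemma sum_pushf_mul (p : α → ℝ) (f : α → β) (φ : β → ℝ) :
    ∑ b, pushf p f b * φ b = ∑ a, p a * φ (f a) := by
  simp_rw [pushf, sum_mul]
  rw [sum_comm]
  simp

lemma sum_pushf (p : α → ℝ) (f : α → β) : ∑ b, pushf p f b = ∑ a, p a := by
  simpa using sum_pushf_mul p f fun _ => 1

lemma pushf_pushf (p : α → ℝ) (f : α → β) (g : β → γ) :
    pushf (pushf p f) g = pushf p fun a => g (f a) := by
  funext c
  rw [pushf_apply, sum_pushf_mul p f fun b => if g b = c then 1 else 0, ← pushf_apply]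

lemma pushf_mem_stdSimplex {p : α → ℝ} (hp : p ∈ stdSimplex ℝ α) (f : α → β) :
    pushf p f ∈ stdSimplex ℝ β :=
  ⟨pushf_nonneg hp.1 f, (sum_pushf p f).trans hp.2⟩

end Pushforward

/-! ### Product laws and kernels -/

section Kernel

variable {α β γ δ : Type*} [Fintype α] [Fintype β]

lemma uniform_mem_stdSimplex {M : ℕ} (hM : 0 < M) :
    (fun _ : Fin M => 1 / (M : ℝ)) ∈ stdSimplex ℝ (Fin M) := by
  refine ⟨fun _ => by positivity, ?_⟩
  have : (M : ℝ) ≠ 0 := by positivity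
  simp [this]

lemma mul_mem_stdSimplex {p : α → ℝ} {κ : α → β → ℝ} (hp : p ∈ stdSimplex ℝ α)
    (hκ : ∀ a, κ a ∈ stdSimplex ℝ β) :
    (fun z : α × β => p z.1 * κ z.1 z.2) ∈ stdSimplex ℝ (α × β) := by
  refine ⟨fun z => mul_nonneg (hp.1 _) ((hκ _).1 _), ?_⟩
  simp_rw [Fintype.sum_prod_type, ← mul_sum, (hκ _).2, mul_one, hp.2]

lemma pushf_fst_mul (p : α → ℝ) {q : β → ℝ} (hq : ∑ b, q b = 1) :
    pushf (fun z : α × β => p z.1 * q z.2) Prod.fst = p := by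
  funext a
  simp [pushf, Fintype.sum_prod_type, sum_ite_irrel, ← mul_sum, hq]

lemma pushf_snd_mul {p : α → ℝ} (hp : ∑ a, p a = 1) (q : β → ℝ) :
    pushf (fun z : α × β => p z.1 * q z.2) Prod.snd = q := by
  funext b
  simp [pushf, Fintype.sum_prod_type_right, sum_ite_irrel, ← sum_mul, hp]

section Pi

variable {ι : Type*} [Fintype ι] [DecidableEq ι] {β : ι → Type*} [∀ i, Fintype (β i)]
  {p : ∀ i, β i → ℝ}

lemma prod_mem_stdSimplex (hp : ∀ i, p i ∈ stdSimplex ℝ (β i)) :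
    (fun v : ∀ i, β i => ∏ i, p i (v i)) ∈ stdSimplex ℝ (∀ i, β i) := by
  refine ⟨fun v => prod_nonneg fun i _ => (hp i).1 _, ?_⟩
  rw [← Fintype.piFinset_univ, ← prod_univ_sum]
  simp_rw [(hp _).2, prod_const_one]

lemma pushf_prod_eval (hp : ∀ i, ∑ b, p i b = 1) (i : ι) :
    pushf (fun v : ∀ i, β i => ∏ j, p j (v j)) (fun v => v i) = p i := by
  funext b
  have restrict_factor : ∀ v : ∀ i, β i, (if v i = b then ∏ j, p j (v j) else 0)
      = ∏ j, Function.update p i (fun c => if c = b then p i c else 0) j (v j) := fun v => by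
    rw [← mul_prod_erase _ _ (mem_univ i), ← mul_prod_erase _ _ (mem_univ i),
      Function.update_self, ite_mul, zero_mul]
    congr! 2
    exact prod_congr rfl fun j hj => by rw [Function.update_of_ne (ne_of_mem_erase hj)]
  simp_rw [pushf, restrict_factor]
  rw [← Fintype.piFinset_univ, ← prod_univ_sum, prod_eq_single i]
  · simp
  · intro j _ hj
    rw [Function.update_of_ne hj, hp]
  · simp

end Pi

lemma exists_kernel_of_nonneg {ι : Type*} [Nonempty β] {J : ι → β → ℝ} (hJ : ∀ a b, 0 ≤ J a b) :
    ∃ κ : ι → β → ℝ, (∀ a, κ a ∈ stdSimplex ℝ β) ∧ ∀ a b, (∑ c, J a c) * κ a b = J a b := by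
  suffices ∀ a, ∃ k ∈ stdSimplex ℝ β, ∀ b, (∑ c, J a c) * k b = J a b by
    choose κ hκ hJκ using this
    exact ⟨κ, hκ, hJκ⟩
  intro a
  by_cases hsum : ∑ c, J a c = 0
  · have hzero := (sum_eq_zero_iff_of_nonneg fun c _ => hJ a c).1 hsum
    exact ⟨Pi.single (Classical.arbitrary β) 1, single_mem_stdSimplex ℝ _,
      fun b => by rw [hsum, zero_mul, hzero b (mem_univ b)]⟩
  · refine ⟨fun b => J a b / ∑ c, J a c,
      ⟨fun b => div_nonneg (hJ a b) (sum_nonneg fun c _ => hJ a c), ?_⟩,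
      fun b => mul_div_cancel₀ _ hsum⟩
    rw [← sum_div, div_self hsum]

lemma exists_kernels_mul_eq_pushf [Fintype δ] {p : α → ℝ} (hp : p ∈ stdSimplex ℝ α) (f : α → γ)
    (g : α → β) (h : α → δ) :
    ∃ (κ : γ → β → ℝ) (κ' : β → γ → δ → ℝ), (∀ c, κ c ∈ stdSimplex ℝ β) ∧
      (∀ b c, κ' b c ∈ stdSimplex ℝ δ) ∧
      ∀ c b d, pushf p f c * κ c b * κ' b c d = pushf p (fun a => (f a, g a, h a)) (c, b, d) := by
  obtain ⟨a₀⟩ : Nonempty α := by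
    by_contra! hα
    simpa using hp.2
  have : Nonempty β := ⟨g a₀⟩
  have : Nonempty δ := ⟨h a₀⟩
  obtain ⟨κ, hκ, hκ_eq⟩ := exists_kernel_of_nonneg
    (J := fun c b => pushf p (fun a => (f a, g a)) (c, b)) fun c b => pushf_nonneg hp.1 _ _
  obtain ⟨κ', hκ', hκ'_eq⟩ := exists_kernel_of_nonneg
    (J := fun i d => pushf p (fun a => ((f a, g a), h a)) (i, d)) fun i d => pushf_nonneg hp.1 _ _
  simp_rw [sum_pushf_pair_right] at hκ_eq hκ'_eq
  refine ⟨κ, fun b c => κ' (c, b), hκ, fun b c => hκ' (c, b), fun c b d => ?_⟩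
  rw [hκ_eq, hκ'_eq]
  simp only [pushf, Prod.mk.injEq, and_assoc]

end Kernel

/-! ### Entropy -/

section Entropy

variable {α β γ δ : Type*} [Fintype α] [Fintype β] [Fintype γ]

lemma entRV_eq_neg_sum (p : α → ℝ) (f : α → β) :
    entRV p f = -∑ a, p a * logb 2 (pushf p f (f a)) :=
  congrArg Neg.neg (sum_pushf_mul p f fun b => logb 2 (pushf p f b))

lemma entRV_congr (p : α → ℝ) {f : α → β} {g : α → γ} (h : ∀ a b, f a = f b ↔ g a = g b) :
    entRV p f = entRV p g := by
  simp_rw [entRV_eq_neg_sum, pushf, h]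

lemma entRV_comp_le {p : α → ℝ} (hp : ∀ a, 0 ≤ p a) (f : α → β) (h : β → γ) :
    entRV p (fun a => h (f a)) ≤ entRV p f := by
  rw [entRV_eq_neg_sum, entRV_eq_neg_sum, neg_le_neg_iff]
  refine sum_le_sum fun a _ => ?_
  by_cases ha : p a = 0
  · simp [ha]
  refine mul_le_mul_of_nonneg_left ?_ (hp a)
  rw [← pushf_pushf p f h]
  exact logb_le_logb_of_le one_lt_two (pushf_pos hp f ha) (le_pushf (pushf_nonneg hp f) h (f a))

lemma mul_logb_sub_mul_logb_le {x y : ℝ} (hx : 0 ≤ x) (hy : 0 ≤ y) (hxy : x ≠ 0 → y ≠ 0) :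
    x * logb 2 y - x * logb 2 x ≤ (y - x) / log 2 := by
  have hlog : 0 < log 2 := log_pos one_lt_two
  rcases hx.eq_or_lt with rfl | hx
  · simpa using div_nonneg hy hlog.le
  have hy : 0 < y := hy.lt_of_ne' (hxy hx.ne')
  calc x * logb 2 y - x * logb 2 x = x * log (y / x) / log 2 := by
        rw [log_div hy.ne' hx.ne', logb, logb]; ring
    _ ≤ x * (y / x - 1) / log 2 := by gcongr; exact log_le_sub_one_of_pos (div_pos hy hx)
    _ = (y - x) / log 2 := by field_simp

lemma ent_le_neg_sum_mul_logb {p q : α → ℝ} (hp : ∀ a, 0 ≤ p a) (hq : ∀ a, 0 ≤ q a)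
    (hpq : ∀ a, p a ≠ 0 → q a ≠ 0) (hsum : ∑ a, q a ≤ ∑ a, p a) :
    ent p ≤ -∑ a, p a * logb 2 (q a) := by
  rw [ent, neg_le_neg_iff, ← sub_nonpos, ← sum_sub_distrib]
  calc ∑ a, (p a * logb 2 (q a) - p a * logb 2 (p a)) ≤ ∑ a, (q a - p a) / log 2 :=
        sum_le_sum fun a _ => mul_logb_sub_mul_logb_le (hp a) (hq a) (hpq a)
    _ = (∑ a, q a - ∑ a, p a) / log 2 := by rw [← sum_div, sum_sub_distrib]
    _ ≤ 0 := div_nonpos_of_nonpos_of_nonneg (sub_nonpos.2 hsum) (log_pos one_lt_two).le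

lemma entRV_le_neg_sum_mul_logb {p : α → ℝ} {q : β → ℝ} (hp : ∀ a, 0 ≤ p a) (f : α → β)
    (hq : ∀ b, 0 ≤ q b) (hpq : ∀ a, p a ≠ 0 → q (f a) ≠ 0) (hsum : ∑ b, q b ≤ ∑ a, p a) :
    entRV p f ≤ -∑ a, p a * logb 2 (q (f a)) := by
  rw [← sum_pushf_mul p f fun b => logb 2 (q b)]
  refine ent_le_neg_sum_mul_logb (pushf_nonneg hp f) hq (fun b hb => ?_) (by rwa [sum_pushf])
  obtain ⟨a, rfl, ha⟩ := exists_ne_zero_of_pushf_ne_zero hb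
  exact hpq a ha

lemma entRV_le_logb_card [Nonempty β] {p : α → ℝ} (hp : p ∈ stdSimplex ℝ α) (f : α → β) :
    entRV p f ≤ logb 2 (Fintype.card β) := by
  have hcard : (Fintype.card β : ℝ) ≠ 0 := by simp
  refine (entRV_le_neg_sum_mul_logb (q := fun _ => 1 / (Fintype.card β : ℝ)) hp.1 f
    (fun _ => by positivity) (fun _ _ => by positivity) ?_).trans_eq ?_
  · simp [hp.2, hcard]
  · rw [← sum_mul, hp.2, one_div, logb_inv, one_mul, neg_neg]

lemma condEnt_le_neg_sum_mul_logb {p : α → ℝ} (hp : ∀ a, 0 ≤ p a) (f : α → β) (g : α → γ)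
    {κ : γ → β → ℝ} (hκ : ∀ c, κ c ∈ stdSimplex ℝ β) (hpκ : ∀ a, p a ≠ 0 → κ (g a) (f a) ≠ 0) :
    condEnt p f g ≤ -∑ a, p a * logb 2 (κ (g a) (f a)) := by
  have hgibbs := entRV_le_neg_sum_mul_logb (q := fun z : β × γ => pushf p g z.2 * κ z.2 z.1) hp
    (fun a => (f a, g a)) (fun z => mul_nonneg (pushf_nonneg hp g _) ((hκ _).1 _))
    (fun a ha => mul_ne_zero (pushf_pos hp g ha).ne' (hpκ a ha))
    (by simp_rw [Fintype.sum_prod_type_right, ← mul_sum, (hκ _).2, mul_one, sum_pushf, le_refl])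
  have hsplit : ∀ a, p a * logb 2 (pushf p g (g a) * κ (g a) (f a))
      = p a * logb 2 (pushf p g (g a)) + p a * logb 2 (κ (g a) (f a)) := fun a => by
    by_cases ha : p a = 0
    · simp [ha]
    rw [logb_mul (pushf_pos hp g ha).ne' (hpκ a ha), mul_add]
  simp_rw [hsplit, sum_add_distrib] at hgibbs
  rw [condEnt, entRV_eq_neg_sum p g]
  linarith

lemma condEnt_le_entRV {p : α → ℝ} (hp : p ∈ stdSimplex ℝ α) (f : α → β) (g : α → γ) :
    condEnt p f g ≤ entRV p f := by
  rw [entRV_eq_neg_sum p f]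
  exact condEnt_le_neg_sum_mul_logb hp.1 f g (κ := fun _ => pushf p f)
    (fun _ => pushf_mem_stdSimplex hp f) fun a ha => (pushf_pos hp.1 f ha).ne'

lemma mi_nonneg {p : α → ℝ} (hp : p ∈ stdSimplex ℝ α) (f : α → β) (g : α → γ) :
    0 ≤ mi p f g := by
  have := condEnt_le_entRV hp f g
  rw [condEnt] at this
  rw [mi]
  linarith

lemma mi_le_entRV_right {p : α → ℝ} (hp : ∀ a, 0 ≤ p a) (f : α → β) (g : α → γ) :
    mi p f g ≤ entRV p g := by
  have := entRV_comp_le hp (fun a => (f a, g a)) Prod.fst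
  rw [mi]
  linarith

lemma mi_pushf [Fintype δ] (p : α → ℝ) (h : α → δ) (f : δ → β) (g : δ → γ) :
    mi (pushf p h) f g = mi p (fun a => f (h a)) fun a => g (h a) := by
  simp_rw [mi, entRV, pushf_pushf]

lemma mi_comp_left [Fintype δ] (p : α → ℝ) (f : α → β) (g : α → γ) {e : β → δ}
    (he : Function.Injective e) : mi p (fun a => e (f a)) g = mi p f g := by
  have hpair : entRV p (fun a => (e (f a), g a)) = entRV p fun a => (f a, g a) :=
    entRV_congr p fun a b => by simp only [Prod.mk.injEq, he.eq_iff]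
  rw [mi, mi, hpair, entRV_congr p fun a b => he.eq_iff (a := f a) (b := f b)]

lemma neg_logb_guess_le (correct : Prop) [Decidable correct] {N : ℝ} (hN : 0 < N) :
    -logb 2 ((if correct then 1 / 2 else 0) + 1 / 2 * (1 / N))
      ≤ 1 + if ¬correct then logb 2 N else 0 := by
  have logb_half : logb 2 (1 / 2) = -1 := by
    rw [one_div, logb_inv, logb_self_eq_one one_lt_two]
  by_cases h : correct
  · have : logb 2 (1 / 2) ≤ logb 2 (1 / 2 + 1 / 2 * (1 / N)) :=
      logb_le_logb_of_le one_lt_two (by norm_num) (le_add_of_nonneg_right (by positivity))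
    simp only [h, if_true, not_true, if_false]
    linarith
  · rw [if_neg h, if_pos h, zero_add, logb_mul (by norm_num) (by positivity), logb_half, one_div,
      logb_inv]
    linarith

-- Fano's inequality: Gibbs' inequality against the estimator that trusts `g` with probability
-- `1 / 2` and otherwise guesses uniformly has `1` in place of the binary entropy of the error.
lemma condEnt_le_one_add_error_mul_logb_card [DecidableEq β] {p : α → ℝ} (hp : p ∈ stdSimplex ℝ α)
    (f : α → β) (y : α → γ) (g : γ → β) :
    condEnt p f y ≤ 1 + (∑ a, if g (y a) ≠ f a then p a else 0) * logb 2 (Fintype.card β) := by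
  obtain ⟨a₀⟩ : Nonempty α := by
    by_contra! hα
    simpa using hp.2
  have hcard : 0 < (Fintype.card β : ℝ) := Nat.cast_pos.2 (Fintype.card_pos_iff.2 ⟨f a₀⟩)
  let guess : γ → β → ℝ := fun c b =>
    (if g c = b then 1 / 2 else 0) + 1 / 2 * (1 / (Fintype.card β : ℝ))
  have guess_pos : ∀ c b, 0 < guess c b := fun c b => by
    dsimp only [guess]
    split_ifs <;> positivity
  have guess_sum : ∀ c, ∑ b, guess c b = 1 := fun c => by
    simp only [guess, sum_add_distrib, sum_ite_eq, mem_univ, if_true, sum_const, card_univ,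
      nsmul_eq_mul]
    field_simp
    norm_num
  calc condEnt p f y ≤ -∑ a, p a * logb 2 (guess (y a) (f a)) :=
        condEnt_le_neg_sum_mul_logb hp.1 f y (fun c => ⟨fun b => (guess_pos c b).le, guess_sum c⟩)
          fun a _ => (guess_pos _ _).ne'
    _ = ∑ a, p a * -logb 2 (guess (y a) (f a)) := by simp_rw [mul_neg, sum_neg_distrib]
    _ ≤ ∑ a, p a * (1 + if g (y a) ≠ f a then logb 2 (Fintype.card β) else 0) :=
        sum_le_sum fun a _ => mul_le_mul_of_nonneg_left (neg_logb_guess_le _ hcard) (hp.1 a)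
    _ = 1 + (∑ a, if g (y a) ≠ f a then p a else 0) * logb 2 (Fintype.card β) := by
        simp_rw [mul_add, mul_one, sum_add_distrib, hp.2, sum_mul, mul_ite, ite_mul, mul_zero,
          zero_mul]

lemma ent_mul {p : α → ℝ} {q : β → ℝ} (hp : ∑ a, p a = 1) (hq : ∑ b, q b = 1) :
    ent (fun z : α × β => p z.1 * q z.2) = ent p + ent q := by
  have hterm : ∀ a b, p a * q b * logb 2 (p a * q b)
      = q b * (p a * logb 2 (p a)) + p a * (q b * logb 2 (q b)) := fun a b => by
    by_cases ha : p a = 0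
    · simp [ha]
    by_cases hb : q b = 0
    · simp [hb]
    rw [logb_mul ha hb]
    ring
  simp_rw [ent, Fintype.sum_prod_type, hterm, sum_add_distrib, ← mul_sum, ← sum_mul, hp, hq,
    one_mul, neg_add]

lemma ent_uniform {M : ℕ} (hM : 0 < M) : ent (fun _ : Fin M => 1 / (M : ℝ)) = logb 2 M := by
  rw [ent, ← sum_mul, (uniform_mem_stdSimplex hM).2, one_div, logb_inv, one_mul, neg_neg]

section Pi

variable {ι : Type*} [Fintype ι] {β : ι → Type*} [∀ i, Fintype (β i)]

lemma sum_entRV_eq_neg_sum_mul_logb_prod {p : α → ℝ} (hp : ∀ a, 0 ≤ p a) (f : ∀ i, α → β i) :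
    ∑ i, entRV p (f i) = -∑ a, p a * logb 2 (∏ i, pushf p (f i) (f i a)) := by
  have hterm : ∀ a, p a * logb 2 (∏ i, pushf p (f i) (f i a))
      = ∑ i, p a * logb 2 (pushf p (f i) (f i a)) := fun a => by
    by_cases ha : p a = 0
    · simp [ha]
    rw [logb_prod _ _ fun i _ => (pushf_pos hp (f i) ha).ne', mul_sum]
  simp_rw [hterm, entRV_eq_neg_sum, sum_neg_distrib]
  rw [sum_comm]

variable [DecidableEq ι]

lemma entRV_pi_le_sum_entRV {p : α → ℝ} (hp : p ∈ stdSimplex ℝ α) (f : ∀ i, α → β i) :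
    entRV p (fun a i => f i a) ≤ ∑ i, entRV p (f i) := by
  have hprod := prod_mem_stdSimplex fun i => pushf_mem_stdSimplex hp (f i)
  rw [sum_entRV_eq_neg_sum_mul_logb_prod hp.1]
  exact entRV_le_neg_sum_mul_logb hp.1 _ hprod.1
    (fun a ha => prod_ne_zero_iff.2 fun i _ => (pushf_pos hp.1 (f i) ha).ne')
    (hprod.2.trans hp.2.symm).le

lemma ent_prod {p : ∀ i, β i → ℝ} (hp : ∀ i, p i ∈ stdSimplex ℝ (β i)) :
    ent (fun v : ∀ i, β i => ∏ i, p i (v i)) = ∑ i, ent (p i) := by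
  have h := sum_entRV_eq_neg_sum_mul_logb_prod (prod_mem_stdSimplex hp).1 fun i v => v i
  simp_rw [entRV, pushf_prod_eval fun i => (hp i).2] at h
  exact h.symm

end Pi

end Entropy

/-! ### Total variation -/

section TotalVariation

variable {α β : Type*} [Fintype α] [Fintype β]

lemma TV_nonneg (p q : α → ℝ) : 0 ≤ TV p q :=
  div_nonneg (sum_nonneg fun _ _ => abs_nonneg _) zero_le_two

lemma TV_eq_sum_max {p q : α → ℝ} (h : ∑ a, p a = ∑ a, q a) :
    TV p q = ∑ a, max (q a - p a) 0 := by
  have habs : ∀ a, |p a - q a| = 2 * max (q a - p a) 0 + (p a - q a) := fun a => by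
    rcases le_total (p a) (q a) with hpq | hpq
    · rw [abs_of_nonpos (sub_nonpos.2 hpq), max_eq_left (sub_nonneg.2 hpq)]; ring
    · rw [abs_of_nonneg (sub_nonneg.2 hpq), max_eq_right (sub_nonpos.2 hpq)]; ring
  simp_rw [TV, habs, sum_add_distrib, sum_sub_distrib, h, sub_self, add_zero, ← mul_sum]
  ring

lemma sum_ite_le_sum_ite_add_TV {p q : α → ℝ} (h : ∑ a, p a = ∑ a, q a) (E : α → Prop)
    [DecidablePred E] :
    ∑ a, (if E a then q a else 0) ≤ ∑ a, (if E a then p a else 0) + TV p q := by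
  rw [TV_eq_sum_max h, ← sum_add_distrib]
  refine sum_le_sum fun a _ => ?_
  split_ifs
  · linarith [le_max_left (q a - p a) 0]
  · simp

lemma TV_sum_mul_le {w : β → ℝ} (hw : w ∈ stdSimplex ℝ β) (κ : β → α → ℝ) (q : α → ℝ) :
    TV (fun a => ∑ b, w b * κ b a) q ≤ ∑ b, w b * TV (κ b) q := by
  have habs : ∀ a, |∑ b, w b * κ b a - q a| ≤ ∑ b, w b * |κ b a - q a| := fun a => by
    calc |∑ b, w b * κ b a - q a| = |∑ b, w b * (κ b a - q a)| := by
          simp_rw [mul_sub, sum_sub_distrib, ← sum_mul, hw.2, one_mul]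
      _ ≤ ∑ b, |w b * (κ b a - q a)| := abs_sum_le_sum_abs _ _
      _ = ∑ b, w b * |κ b a - q a| := by simp_rw [abs_mul, abs_of_nonneg (hw.1 _)]
  calc TV (fun a => ∑ b, w b * κ b a) q ≤ (∑ a, ∑ b, w b * |κ b a - q a|) / 2 := by
        rw [TV]; gcongr with a; exact habs a
    _ = ∑ b, w b * TV (κ b) q := by
        rw [sum_comm]
        simp_rw [TV, ← mul_sum, ← mul_div_assoc, sum_div]

lemma TV_mul_kernel {w : α → ℝ} (hw : ∀ a, 0 ≤ w a) (κ κ' : α → β → ℝ) :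
    TV (fun z : β × α => w z.2 * κ z.2 z.1) (fun z => w z.2 * κ' z.2 z.1)
      = ∑ a, w a * TV (κ a) (κ' a) := by
  simp_rw [TV, Fintype.sum_prod_type_right, ← mul_sub, abs_mul, abs_of_nonneg (hw _), ← mul_sum,
    ← mul_div_assoc, sum_div]

/-- The law of a `κ`-distributed point that is kept with probability `ρ x` when it is at `x`, and
is otherwise replaced by an independent sample from `ν`. -/
def redirect (ρ ν κ : α → ℝ) : α → ℝ :=
  fun x => κ x * ρ x + (∑ y, κ y * (1 - ρ y)) * ν x

section Redirect

variable {ρ ν κ : α → ℝ}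

lemma redirect_mem_stdSimplex (hρ : ∀ x, ρ x ∈ Set.Icc 0 1) (hν : ν ∈ stdSimplex ℝ α)
    (hκ : κ ∈ stdSimplex ℝ α) : redirect ρ ν κ ∈ stdSimplex ℝ α := by
  have hmoved : 0 ≤ ∑ y, κ y * (1 - ρ y) :=
    sum_nonneg fun y _ => mul_nonneg (hκ.1 y) (sub_nonneg.2 (hρ y).2)
  refine ⟨fun x => add_nonneg (mul_nonneg (hκ.1 x) (hρ x).1) (mul_nonneg hmoved (hν.1 x)), ?_⟩
  simp_rw [redirect, sum_add_distrib, ← mul_sum, hν.2, mul_one, mul_sub, mul_one, sum_sub_distrib,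
    hκ.2, add_sub_cancel]

lemma TV_redirect_le (hρ : ∀ x, ρ x ∈ Set.Icc 0 1) (hν : ν ∈ stdSimplex ℝ α)
    (hκ : κ ∈ stdSimplex ℝ α) : TV κ (redirect ρ ν κ) ≤ ∑ x, κ x * (1 - ρ x) := by
  rw [TV_eq_sum_max (hκ.2.trans (redirect_mem_stdSimplex hρ hν hκ).2.symm)]
  have hmoved : 0 ≤ ∑ y, κ y * (1 - ρ y) :=
    sum_nonneg fun y _ => mul_nonneg (hκ.1 y) (sub_nonneg.2 (hρ y).2)
  calc ∑ x, max (redirect ρ ν κ x - κ x) 0 ≤ ∑ x, (∑ y, κ y * (1 - ρ y)) * ν x := by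
        refine sum_le_sum fun x _ => max_le ?_ (mul_nonneg hmoved (hν.1 x))
        rw [redirect, sub_le_iff_le_add']
        gcongr
        exact mul_le_of_le_one_right (hκ.1 x) (hρ x).2
    _ = ∑ x, κ x * (1 - ρ x) := by rw [← mul_sum, hν.2, mul_one]

lemma sum_mul_redirect (ρ ν : α → ℝ) (w : β → ℝ) (κ : β → α → ℝ) (x : α) :
    ∑ i, w i * redirect ρ ν (κ i) x = redirect ρ ν (fun y => ∑ i, w i * κ i y) x := by
  simp_rw [redirect, mul_add, sum_add_distrib, sum_mul, mul_sum, mul_assoc]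
  rw [sum_comm (s := univ (α := α))]

end Redirect

-- Keep `x` with probability `min 1 (q x / p x)` and resample from the normalised excess `(q - p)⁺`.
lemma exists_redirect_eq {p q : α → ℝ} (hp : p ∈ stdSimplex ℝ α) (hq : q ∈ stdSimplex ℝ α) :
    ∃ ρ ν : α → ℝ, (∀ x, ρ x ∈ Set.Icc 0 1) ∧ ν ∈ stdSimplex ℝ α ∧ redirect ρ ν p = q ∧
      ∑ x, p x * (1 - ρ x) = TV p q := by
  have hkept : ∀ x, p x * min 1 (q x / p x) = q x - max (q x - p x) 0 := fun x => by
    rw [mul_min_of_nonneg _ _ (hp.1 x), mul_one, ← min_sub_sub_left, sub_sub_cancel, sub_zero]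
    rcases (hp.1 x).eq_or_lt with h | h
    · simp [← h, hq.1 x]
    · rw [mul_div_cancel₀ _ h.ne']
  have hmoved : ∑ x, p x * (1 - min 1 (q x / p x)) = TV p q := by
    simp_rw [mul_sub, hkept, mul_one, sum_sub_distrib, hp.2, hq.2, sub_sub_cancel,
      TV_eq_sum_max (hp.2.trans hq.2.symm)]
  have hρ : ∀ x, min 1 (q x / p x) ∈ Set.Icc (0 : ℝ) 1 := fun x =>
    ⟨le_min zero_le_one (div_nonneg (hq.1 x) (hp.1 x)), min_le_left _ _⟩
  have hexcess : ∀ x, 0 ≤ max (q x - p x) 0 := fun x => le_max_right _ _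
  rcases (TV_nonneg p q).eq_or_lt with hTV | hTV
  · have hzero : ∀ x, max (q x - p x) 0 = 0 := fun x =>
      (sum_eq_zero_iff_of_nonneg fun x _ => hexcess x).1
        ((TV_eq_sum_max (hp.2.trans hq.2.symm)).symm.trans hTV.symm) x (mem_univ x)
    refine ⟨_, q, hρ, hq, funext fun x => ?_, hmoved⟩
    rw [redirect, hmoved, hkept, hzero, ← hTV, sub_zero, zero_mul, add_zero]
  · refine ⟨_, fun x => max (q x - p x) 0 / TV p q, hρ,
      ⟨fun x => div_nonneg (hexcess x) hTV.le, ?_⟩, funext fun x => ?_, hmoved⟩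
    · rw [← sum_div, ← TV_eq_sum_max (hp.2.trans hq.2.symm), div_self hTV.ne']
    · rw [redirect, hmoved, hkept, mul_div_cancel₀ _ hTV.ne', sub_add_cancel]

lemma exists_kernel_mixture_eq {w : β → ℝ} {κ : β → α → ℝ} {q : α → ℝ}
    (hw : w ∈ stdSimplex ℝ β) (hκ : ∀ i, κ i ∈ stdSimplex ℝ α) (hq : q ∈ stdSimplex ℝ α) :
    ∃ κ' : β → α → ℝ, (∀ i, κ' i ∈ stdSimplex ℝ α) ∧ (∀ x, ∑ i, w i * κ' i x = q x) ∧
      ∑ i, w i * TV (κ i) (κ' i) ≤ TV (fun x => ∑ i, w i * κ i x) q := by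
  have hmix : (fun x => ∑ i, w i * κ i x) ∈ stdSimplex ℝ α := by
    refine ⟨fun x => sum_nonneg fun i _ => mul_nonneg (hw.1 i) ((hκ i).1 x), ?_⟩
    rw [sum_comm]
    simp_rw [← mul_sum, (hκ _).2, mul_one, hw.2]
  obtain ⟨ρ, ν, hρ, hν, hredirect, hmoved⟩ := exists_redirect_eq hmix hq
  refine ⟨fun i => redirect ρ ν (κ i), fun i => redirect_mem_stdSimplex hρ hν (hκ i),
    fun x => (sum_mul_redirect ρ ν w κ x).trans (congrFun hredirect x), ?_⟩
  calc ∑ i, w i * TV (κ i) (redirect ρ ν (κ i)) ≤ ∑ i, w i * ∑ x, κ i x * (1 - ρ x) :=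
        sum_le_sum fun i _ => mul_le_mul_of_nonneg_left (TV_redirect_le hρ hν (hκ i)) (hw.1 i)
    _ = ∑ x, (∑ i, w i * κ i x) * (1 - ρ x) := by
        simp_rw [mul_sum, sum_mul, mul_assoc]
        rw [sum_comm]
    _ = TV (fun x => ∑ i, w i * κ i x) q := hmoved

end TotalVariation

/-! ### Single-letterization -/

/-- The `i`-th hybrid of two sequences: the entries of `x` before position `i`, those of `s` from
position `i` on. -/
def splice {X S : Type*} {n : ℕ} (i : ℕ) (x : Fin n → X) (s : Fin n → S) : Fin n → X ⊕ S :=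
  fun j => if (j : ℕ) < i then .inl (x j) else .inr (s j)

/-- The auxiliary variable `Uᵢ = (V, X₁, …, Xᵢ₋₁, Sᵢ₊₁, …, Sₙ)` of the Gel'fand–Pinsker converse. -/
def auxVar {Ω ν X S : Type*} {n : ℕ} (V : Ω → ν) (x : Ω → Fin n → X) (s : Ω → Fin n → S)
    (i : Fin n) : Ω → ν × ({j // j ≠ i} → X ⊕ S) :=
  fun ω => (V ω, fun j => splice i (x ω) (s ω) j)

section Splice

variable {X S : Type*} {n : ℕ}

lemma splice_zero (x : Fin n → X) (s : Fin n → S) : splice 0 x s = fun j => .inr (s j) := by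
  funext j
  simp [splice]

lemma splice_length (x : Fin n → X) (s : Fin n → S) : splice n x s = fun j => .inl (x j) := by
  funext j
  simp [splice]

lemma splice_eq_splice_iff {x x' : Fin n → X} {s s' : Fin n → S} {i : Fin n} :
    splice i x s = splice i x' s' ↔
      (∀ j : {j // j ≠ i}, splice i x s j = splice i x' s' j) ∧ s i = s' i := by
  simp only [funext_iff, Subtype.forall]
  refine ⟨fun h => ⟨fun j _ => h j, by simpa [splice] using h i⟩, fun h j => ?_⟩
  by_cases hj : j = i
  · simpa [hj, splice] using h.2
  · exact h.1 j hj

lemma splice_succ_eq_splice_succ_iff {x x' : Fin n → X} {s s' : Fin n → S} {i : Fin n} :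
    splice (i + 1) x s = splice (i + 1) x' s' ↔
      (∀ j : {j // j ≠ i}, splice i x s j = splice i x' s' j) ∧ x i = x' i := by
  have hne : ∀ j ≠ i, ((j : ℕ) < i + 1 ↔ (j : ℕ) < i) := by omega
  simp only [funext_iff, Subtype.forall]
  refine ⟨fun h => ⟨fun j hj => by simpa only [splice, hne j hj] using h j,
    by simpa [splice] using h i⟩, fun h j => ?_⟩
  by_cases hj : j = i
  · simpa [hj, splice] using h.2
  · simpa only [splice, hne j hj] using h.1 j hj

variable {α ν : Type*} [Fintype α] [Fintype X] [Fintype S] [Fintype ν]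

-- `(Uᵢ, Xᵢ)` and `(Uᵢ, Sᵢ)` determine the hybrids `i + 1` and `i`, so the sum telescopes.
lemma sum_mi_auxVar_sub (p : α → ℝ) (V : α → ν) (x : α → Fin n → X) (s : α → Fin n → S) :
    ∑ i, (mi p (auxVar V x s i) (fun a => x a i) - mi p (auxVar V x s i) fun a => s a i)
      = (∑ i, entRV p (fun a => x a i) - entRV p fun a => (V a, x a))
        - (∑ i, entRV p (fun a => s a i) - entRV p fun a => (V a, s a)) := by
  set H : ℕ → ℝ := fun i => entRV p fun a => (V a, splice i (x a) (s a))
  have haux_x : ∀ i, entRV p (fun a => (auxVar V x s i a, x a i)) = H (i + 1) := fun i =>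
    entRV_congr p fun a b => by
      simp only [auxVar, Prod.mk.injEq, funext_iff (β := fun _ => X ⊕ S), and_assoc]
      simp only [← funext_iff, splice_succ_eq_splice_succ_iff]
  have haux_s : ∀ i, entRV p (fun a => (auxVar V x s i a, s a i)) = H i := fun i =>
    entRV_congr p fun a b => by
      simp only [auxVar, Prod.mk.injEq, funext_iff (β := fun _ => X ⊕ S), and_assoc]
      simp only [← funext_iff, splice_eq_splice_iff]
  have hzero : H 0 = entRV p fun a => (V a, s a) :=
    entRV_congr p fun a b => by simp [splice_zero, funext_iff]
  have hlength : H n = entRV p fun a => (V a, x a) :=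
    entRV_congr p fun a b => by simp [splice_length, funext_iff]
  have hterm : ∀ i : Fin n,
      mi p (auxVar V x s i) (fun a => x a i) - mi p (auxVar V x s i) (fun a => s a i)
        = entRV p (fun a => x a i) - entRV p (fun a => s a i) + (H i - H (i + 1)) := fun i => by
    rw [mi, mi, haux_x, haux_s]
    ring
  simp_rw [hterm, sum_add_distrib, sum_sub_distrib]
  rw [← sum_sub_distrib (f := fun i : Fin n => H i),
    Fin.sum_univ_eq_sum_range (fun i => H i - H (i + 1)) n, sum_range_sub', hzero, hlength]
  ring

end Splice

section SingleLetter

variable {α β S X : Type*} [Fintype α] [Fintype β] [Fintype S] [Fintype X]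

/-- The law of `(X, S)` when `S` has law `PS` and `X` is drawn from `PXgS S`. -/
def baseLaw (PS : S → ℝ) (PXgS : S → X → ℝ) : X × S → ℝ := fun xs => PXgS xs.2 xs.1 * PS xs.2

/-- The values `I(U;X) − I(U;S)` over all finite auxiliary alphabets and all test channels
`P_{U|S}`, `W_{X|U,S}` that induce the conditional law `PXgS` of `X` given `S`. -/
def singleLetterRates (PS : S → ℝ) (PXgS : S → X → ℝ) : Set ℝ :=
  { r : ℝ | ∃ (nU : ℕ) (PU : S → Fin nU → ℝ) (W : Fin nU → S → X → ℝ),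
    (∀ s u, 0 ≤ PU s u) ∧ (∀ s, ∑ u, PU s u = 1) ∧
    (∀ u s x, 0 ≤ W u s x) ∧ (∀ u s, ∑ x, W u s x = 1) ∧
    (∀ s, 0 < PS s → ∀ x, ∑ u, PU s u * W u s x = PXgS s x) ∧
    r = mi (fun z : S × Fin nU × X => PS z.1 * PU z.1 z.2.1 * W z.2.1 z.1 z.2.2)
          (fun z => z.2.1) (fun z => z.2.2)
      - mi (fun z : S × Fin nU × X => PS z.1 * PU z.1 z.2.1 * W z.2.1 z.1 z.2.2)
          (fun z => z.2.1) (fun z => z.1) }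

variable {PS : S → ℝ} {PXgS : S → X → ℝ}

lemma bddAbove_singleLetterRates (hPS : PS ∈ stdSimplex ℝ S) :
    BddAbove (singleLetterRates PS PXgS) := by
  refine ⟨logb 2 (Fintype.card X), ?_⟩
  rintro _ ⟨nU, PU, W, hPU0, hPU1, hW0, hW1, -, rfl⟩
  have hJ : (fun z : S × Fin nU × X => PS z.1 * PU z.1 z.2.1 * W z.2.1 z.1 z.2.2)
      ∈ stdSimplex ℝ (S × Fin nU × X) := by
    simp_rw [mul_assoc]
    exact mul_mem_stdSimplex (κ := fun s (z : Fin nU × X) => PU s z.1 * W z.1 s z.2) hPS fun s =>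
      mul_mem_stdSimplex ⟨hPU0 s, hPU1 s⟩ fun u => ⟨hW0 u s, hW1 u s⟩
  obtain ⟨-, -, x⟩ : Nonempty (S × Fin nU × X) := by
    by_contra! h
    simpa using hJ.2
  have : Nonempty X := ⟨x⟩
  linarith [mi_nonneg hJ (fun z : S × Fin nU × X => z.2.1) fun z => z.1,
    mi_le_entRV_right hJ.1 (fun z : S × Fin nU × X => z.2.1) fun z => z.2.2,
    entRV_le_logb_card hJ fun z : S × Fin nU × X => z.2.2]

lemma pushf_snd_baseLaw (hPXgS : ∀ s, ∑ x, PXgS s x = 1) :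
    pushf (baseLaw PS PXgS) Prod.snd = PS := by
  funext s
  simp [pushf, baseLaw, Fintype.sum_prod_type_right, ← sum_mul, hPXgS]

lemma mi_sub_mi_mem_singleLetterRates (hPXgS : ∀ s, ∑ x, PXgS s x = 1)
    {p : α → ℝ} (hp : p ∈ stdSimplex ℝ α) (u : α → β) {x : α → X} {s : α → S}
    (hxs : pushf p (fun ω => (x ω, s ω)) = baseLaw PS PXgS) :
    mi p u x - mi p u s ∈ singleLetterRates PS PXgS := by
  set e := Fintype.equivFin β
  obtain ⟨PU, W, hPU, hW, hJ⟩ := exists_kernels_mul_eq_pushf hp s (fun ω => e (u ω)) x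
  have hs : pushf p s = PS := by rw [← pushf_snd_baseLaw (PS := PS) hPXgS, ← hxs, pushf_pushf]
  rw [hs] at hJ
  have hJ_eq : (fun z : S × Fin _ × X => PS z.1 * PU z.1 z.2.1 * W z.2.1 z.1 z.2.2)
      = pushf p fun ω => (s ω, e (u ω), x ω) := funext fun z => hJ z.1 z.2.1 z.2.2
  refine ⟨_, PU, W, fun b => (hPU b).1, fun b => (hPU b).2, fun c b => (hW c b).1,
    fun c b => (hW c b).2, fun b hb a => ?_, ?_⟩
  · refine mul_left_cancel₀ hb.ne' ?_
    simp_rw [mul_sum, ← mul_assoc, hJ]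
    calc ∑ c, pushf p (fun ω => (s ω, e (u ω), x ω)) (b, c, a)
        = ∑ c, pushf p (fun ω => (e (u ω), x ω, s ω)) (c, a, b) := by
          simp [pushf, and_comm, and_assoc]
      _ = PS b * PXgS b a := by rw [sum_pushf_pair_left, hxs, baseLaw, mul_comm]
  · rw [hJ_eq, mi_pushf, mi_pushf, mi_comp_left p u x e.injective, mi_comp_left p u s e.injective]

end SingleLetter

section Converse

variable {α S X μ κ : Type*} [Fintype α] [Fintype S] [Fintype X] [Fintype μ] [DecidableEq μ]
  [Fintype κ] {n : ℕ} {PS : S → ℝ} {PXgS : S → X → ℝ}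

lemma one_sub_error_mul_logb_card_le (hPS : PS ∈ stdSimplex ℝ S) (hPXgS : ∀ s, ∑ x, PXgS s x = 1)
    {p : α → ℝ} (hp : p ∈ stdSimplex ℝ α) (m : α → μ) (k : α → κ) {x : α → Fin n → X}
    {s : α → Fin n → S} (g : (Fin n → X) → κ → μ)
    (hxs : ∀ t, pushf p (fun a => (x a t, s a t)) = baseLaw PS PXgS)
    (hindep : entRV p (fun a => ((m a, k a), s a))
      = logb 2 (Fintype.card μ) + entRV p k + ∑ t, entRV p fun a => s a t) :
    (1 - ∑ a, if g (x a) (k a) ≠ m a then p a else 0) * logb 2 (Fintype.card μ)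
      ≤ n * sSup (singleLetterRates PS PXgS) + 1 := by
  set V : α → μ × κ := fun a => (m a, k a)
  have hrate : ∀ t, mi p (auxVar V x s t) (fun a => x a t) - mi p (auxVar V x s t) (fun a => s a t)
      ≤ sSup (singleLetterRates PS PXgS) := fun t =>
    le_csSup (bddAbove_singleLetterRates hPS) (mi_sub_mi_mem_singleLetterRates hPXgS hp _ (hxs t))
  have hsum := sum_le_card_nsmul univ _ _ fun t _ => hrate t
  rw [sum_mi_auxVar_sub, hindep, card_univ, Fintype.card_fin, nsmul_eq_mul] at hsum
  have hfano := condEnt_le_one_add_error_mul_logb_card hp m (fun a => (x a, k a)) fun y => g y.1 y.2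
  have hkey := condEnt_le_entRV hp k x
  have hletters := entRV_pi_le_sum_entRV hp fun t a => x a t
  have hassoc : entRV p (fun a => (V a, x a)) = entRV p fun a => (m a, x a, k a) :=
    entRV_congr p fun a b => by simp only [V, Prod.mk.injEq]; tauto
  have hswap : entRV p (fun a => (k a, x a)) = entRV p fun a => (x a, k a) :=
    entRV_congr p fun a b => by simp only [Prod.mk.injEq]; tauto
  rw [condEnt] at hfano hkey
  linarith

end Converse

/-! ### Codes -/

section Code

variable {S X κ : Type*} {n M : ℕ}

/-- The base law of `(Xⁿ, Sⁿ)`: independent letters `(Xₜ, Sₜ)`, each with law `baseLaw PS PXgS`. -/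
def iidLaw (PS : S → ℝ) (PXgS : S → X → ℝ) (n : ℕ) : (Fin n → X) × (Fin n → S) → ℝ :=
  fun xs => ∏ t, baseLaw PS PXgS (xs.1 t, xs.2 t)

lemma iidLaw_apply (PS : S → ℝ) (PXgS : S → X → ℝ) (xs : (Fin n → X) × (Fin n → S)) :
    iidLaw PS PXgS n xs = (∏ t, PS (xs.2 t)) * ∏ t, PXgS (xs.2 t) (xs.1 t) := by
  simp_rw [iidLaw, baseLaw, prod_mul_distrib, mul_comm]

variable [Fintype S] [Fintype X] [Fintype κ]

/-- The law of (state, message, key, output) under a stochastic encoder `enc` that is fed an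
i.i.d. state sequence, a uniform message and an independent key of law `PK`. -/
def codeLaw (PS : S → ℝ) (PK : κ → ℝ) (enc : (Fin n → S) → Fin M → κ → (Fin n → X) → ℝ) :
    (Fin n → S) × Fin M × κ × (Fin n → X) → ℝ :=
  fun z => (∏ t, PS (z.1 t)) * (1 / (M : ℝ)) * PK z.2.2.1 * enc z.1 z.2.1 z.2.2.1 z.2.2.2

/-- The law of `(Xⁿ, Sⁿ)` under a code, averaged over the messages and the keys. -/
def outputLaw (PS : S → ℝ) (PK : κ → ℝ) (enc : (Fin n → S) → Fin M → κ → (Fin n → X) → ℝ) :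
    (Fin n → X) × (Fin n → S) → ℝ :=
  pushf (codeLaw PS PK enc) fun z => (z.2.2.2, z.1)

/-- The law of `(Xⁿ, Sⁿ)` under a code given that the message is `m`. -/
def messageLaw (PS : S → ℝ) (PK : κ → ℝ) (enc : (Fin n → S) → Fin M → κ → (Fin n → X) → ℝ)
    (m : Fin M) : (Fin n → X) × (Fin n → S) → ℝ :=
  fun xs => ∑ k, (∏ t, PS (xs.2 t)) * PK k * enc xs.2 m k xs.1

variable {PS : S → ℝ} {PXgS : S → X → ℝ} {PK : κ → ℝ}
  {enc : (Fin n → S) → Fin M → κ → (Fin n → X) → ℝ}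

lemma pushf_iidLaw_eval (hPS : PS ∈ stdSimplex ℝ S) (hPXgS : ∀ s, PXgS s ∈ stdSimplex ℝ X)
    (t : Fin n) :
    pushf (iidLaw PS PXgS n) (fun xs => (xs.1 t, xs.2 t)) = baseLaw PS PXgS := by
  have hsum : ∑ xs, baseLaw PS PXgS xs = 1 := by
    simp_rw [baseLaw, Fintype.sum_prod_type_right, ← sum_mul, (hPXgS _).2, one_mul, hPS.2]
  have hpi : pushf (fun v : Fin n → X × S => ∏ t, baseLaw PS PXgS (v t))
      (Equiv.arrowProdEquivProdArrow (Fin n) (fun _ => X) fun _ => S) = iidLaw PS PXgS n :=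
    pushf_equiv _ _
  rw [← hpi, pushf_pushf]
  exact pushf_prod_eval (fun _ => hsum) t

lemma codeLaw_mem_stdSimplex (hPS : PS ∈ stdSimplex ℝ S) (hPK : PK ∈ stdSimplex ℝ κ) (hM : 0 < M)
    (henc : ∀ s m k, enc s m k ∈ stdSimplex ℝ (Fin n → X)) :
    codeLaw PS PK enc ∈ stdSimplex ℝ ((Fin n → S) × Fin M × κ × (Fin n → X)) := by
  have h := mul_mem_stdSimplex (prod_mem_stdSimplex fun _ : Fin n => hPS) fun s =>
    mul_mem_stdSimplex (uniform_mem_stdSimplex hM) fun m =>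
      mul_mem_stdSimplex hPK fun k => henc s m k
  simp_rw [← mul_assoc] at h
  exact h

lemma outputLaw_apply (xs : (Fin n → X) × (Fin n → S)) :
    outputLaw PS PK enc xs
      = (∏ t, PS (xs.2 t)) * ∑ i : Fin M × κ, 1 / (M : ℝ) * PK i.2 * enc xs.2 i.1 i.2 xs.1 := by
  simp [outputLaw, codeLaw, pushf, Fintype.sum_prod_type, Prod.ext_iff, ite_and, mul_sum, mul_assoc]

lemma outputLaw_eq_sum_messageLaw :
    outputLaw PS PK enc = fun xs => ∑ m, 1 / (M : ℝ) * messageLaw PS PK enc m xs := by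
  funext xs
  simp_rw [outputLaw_apply, messageLaw, Fintype.sum_prod_type, mul_sum]
  exact sum_congr rfl fun m _ => sum_congr rfl fun k _ => by ring

lemma TV_outputLaw_le_iSup_messageLaw (hM : 0 < M) (q : (Fin n → X) × (Fin n → S) → ℝ) :
    TV (outputLaw PS PK enc) q ≤ ⨆ m, TV (messageLaw PS PK enc m) q := by
  have hunif := uniform_mem_stdSimplex hM
  have hle := le_ciSup (Set.finite_range fun m => TV (messageLaw PS PK enc m) q).bddAbove
  calc TV (outputLaw PS PK enc) q ≤ ∑ m, 1 / (M : ℝ) * TV (messageLaw PS PK enc m) q := by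
        rw [outputLaw_eq_sum_messageLaw]
        exact TV_sum_mul_le hunif _ q
    _ ≤ ∑ _m : Fin M, 1 / (M : ℝ) * ⨆ m, TV (messageLaw PS PK enc m) q :=
        sum_le_sum fun m _ => mul_le_mul_of_nonneg_left (hle m) (hunif.1 m)
    _ = ⨆ m, TV (messageLaw PS PK enc m) q := by rw [← sum_mul, hunif.2, one_mul]

lemma pushf_codeLaw_message_key_state (henc : ∀ s m k, ∑ x, enc s m k x = 1) :
    pushf (codeLaw PS PK enc) (fun z => ((z.2.1, z.2.2.1), z.1))
      = fun z => 1 / (M : ℝ) * PK z.1.2 * ∏ t, PS (z.2 t) := by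
  funext z
  rw [mul_comm, ← mul_assoc]
  simp [codeLaw, pushf, Fintype.sum_prod_type, Prod.ext_iff, ite_and, ← mul_sum, henc]

lemma entRV_codeLaw_message_key_state (hPS : PS ∈ stdSimplex ℝ S) (hPK : PK ∈ stdSimplex ℝ κ)
    (hM : 0 < M) (henc : ∀ s m k, ∑ x, enc s m k x = 1) :
    entRV (codeLaw PS PK enc) (fun z => ((z.2.1, z.2.2.1), z.1))
      = logb 2 M + entRV (codeLaw PS PK enc) (fun z => z.2.2.1)
        + ∑ t, entRV (codeLaw PS PK enc) fun z => z.1 t := by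
  have hlaw := pushf_codeLaw_message_key_state (PS := PS) (PK := PK) henc
  have hunif := uniform_mem_stdSimplex hM
  have hstate := prod_mem_stdSimplex fun _ : Fin n => hPS
  have hmk := mul_mem_stdSimplex hunif fun _ => hPK
  have hkey : pushf (codeLaw PS PK enc) (fun z => z.2.2.1) = PK := by
    refine Eq.trans ?_ (pushf_snd_mul hunif.2 PK)
    rw [← pushf_fst_mul (fun i : Fin M × κ => 1 / (M : ℝ) * PK i.2) hstate.2, ← hlaw, pushf_pushf,
      pushf_pushf]
  have hstate_t : ∀ t, pushf (codeLaw PS PK enc) (fun z => z.1 t) = PS := fun t => by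
    refine Eq.trans ?_ (pushf_prod_eval (fun _ => hPS.2) t)
    rw [← pushf_snd_mul hmk.2 fun s : Fin n → S => ∏ t, PS (s t), ← hlaw, pushf_pushf,
      pushf_pushf]
  simp_rw [entRV, hkey, hstate_t]
  rw [hlaw, ent_mul hmk.2 hstate.2, ent_mul hunif.2 hPK.2, ent_uniform hM,
    ent_prod fun _ : Fin n => hPS]

lemma TV_codeLaw (hPS : ∀ s, 0 ≤ PS s) (hPK : ∀ k, 0 ≤ PK k)
    (enc enc' : (Fin n → S) → Fin M → κ → (Fin n → X) → ℝ) :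
    TV (codeLaw PS PK enc) (codeLaw PS PK enc')
      = ∑ s : Fin n → S, (∏ t, PS (s t)) *
          ∑ i : Fin M × κ, 1 / (M : ℝ) * PK i.2 * TV (enc s i.1 i.2) (enc' s i.1 i.2) := by
  have hw : ∀ (s : Fin n → S) k, 0 ≤ (∏ t, PS (s t)) * (1 / (M : ℝ)) * PK k := fun s k =>
    mul_nonneg (mul_nonneg (prod_nonneg fun _ _ => hPS _) (by positivity)) (hPK k)
  simp_rw [TV, codeLaw, ← mul_sub, abs_mul _ (enc _ _ _ _ - _), abs_of_nonneg (hw _ _),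
    Fintype.sum_prod_type, sum_div, mul_sum, mul_div_assoc, mul_assoc]

lemma exists_enc_outputLaw_eq_iidLaw (hPS : PS ∈ stdSimplex ℝ S)
    (hPXgS : ∀ s, PXgS s ∈ stdSimplex ℝ X) (hPK : PK ∈ stdSimplex ℝ κ) (hM : 0 < M)
    (henc : ∀ s m k, enc s m k ∈ stdSimplex ℝ (Fin n → X)) :
    ∃ enc' : (Fin n → S) → Fin M → κ → (Fin n → X) → ℝ,
      (∀ s m k, enc' s m k ∈ stdSimplex ℝ (Fin n → X)) ∧
      outputLaw PS PK enc' = iidLaw PS PXgS n ∧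
      TV (codeLaw PS PK enc) (codeLaw PS PK enc')
        ≤ TV (outputLaw PS PK enc) (iidLaw PS PXgS n) := by
  choose κ' hκ' hmix hTV using fun s : Fin n → S => exists_kernel_mixture_eq
    (mul_mem_stdSimplex (uniform_mem_stdSimplex hM) fun _ => hPK) (κ := fun i => enc s i.1 i.2)
    (fun i => henc s i.1 i.2) (prod_mem_stdSimplex fun t => hPXgS (s t))
  refine ⟨fun s m k => κ' s (m, k), fun s m k => hκ' s (m, k), ?_, ?_⟩
  · funext xs
    rw [outputLaw_apply, iidLaw_apply, ← hmix]
  · have hP : ∀ s : Fin n → S, 0 ≤ ∏ t, PS (s t) := fun s => prod_nonneg fun _ _ => hPS.1 _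
    calc TV (codeLaw PS PK enc) (codeLaw PS PK fun s m k => κ' s (m, k))
        = ∑ s : Fin n → S, (∏ t, PS (s t)) *
            ∑ i : Fin M × κ, 1 / (M : ℝ) * PK i.2 * TV (enc s i.1 i.2) (κ' s i) :=
          TV_codeLaw hPS.1 hPK.1 _ _
      _ ≤ ∑ s : Fin n → S, (∏ t, PS (s t)) *
            TV (fun x => ∑ i : Fin M × κ, 1 / (M : ℝ) * PK i.2 * enc s i.1 i.2 x)
              (fun x => ∏ t, PXgS (s t) (x t)) :=
          sum_le_sum fun s _ => mul_le_mul_of_nonneg_left (hTV s) (hP s)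
      _ = TV (outputLaw PS PK enc) (iidLaw PS PXgS n) := by
          rw [← TV_mul_kernel hP]
          simp_rw [← outputLaw_apply, ← iidLaw_apply]

lemma one_sub_error_add_TV_mul_logb_le (hPS : PS ∈ stdSimplex ℝ S)
    (hPXgS : ∀ s, PXgS s ∈ stdSimplex ℝ X) (hPK : PK ∈ stdSimplex ℝ κ) (hM : 0 < M)
    (henc : ∀ s m k, enc s m k ∈ stdSimplex ℝ (Fin n → X)) (g : (Fin n → X) → κ → Fin M) :
    (1 - ((∑ z, if g z.2.2.2 z.2.2.1 ≠ z.2.1 then codeLaw PS PK enc z else 0)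
        + TV (outputLaw PS PK enc) (iidLaw PS PXgS n))) * logb 2 M
      ≤ n * sSup (singleLetterRates PS PXgS) + 1 := by
  obtain ⟨enc', henc', houtput, hTV⟩ := exists_enc_outputLaw_eq_iidLaw hPS hPXgS hPK hM henc
  have hp := codeLaw_mem_stdSimplex hPS hPK hM henc
  have hp' := codeLaw_mem_stdSimplex hPS hPK hM henc'
  have herror := sum_ite_le_sum_ite_add_TV (hp.2.trans hp'.2.symm)
    fun z => g z.2.2.2 z.2.2.1 ≠ z.2.1
  have hletter : ∀ t, pushf (codeLaw PS PK enc') (fun z => (z.2.2.2 t, z.1 t)) = baseLaw PS PXgS :=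
    fun t => by rw [← pushf_iidLaw_eval hPS hPXgS t, ← houtput, outputLaw, pushf_pushf]
  have hconverse := one_sub_error_mul_logb_card_le hPS (fun s => (hPXgS s).2) hp'
    (fun z => z.2.1) (fun z => z.2.2.1) g hletter
  rw [Fintype.card_fin] at hconverse
  refine le_trans ?_ (hconverse
    (entRV_codeLaw_message_key_state hPS hPK hM fun s m k => (henc' s m k).2))
  gcongr
  · exact logb_nonneg one_lt_two (by exact_mod_cast hM)
  · linarith

end Code

lemma limsup_div_le_of_one_sub_mul_le {L ε : ℕ → ℝ} {C : ℝ} (hL : ∀ n, 0 ≤ L n)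
    (hε : Tendsto ε atTop (nhds 0)) (hbound : ∀ n, (1 - ε n) * L n ≤ n * C + 1) :
    limsup (fun n => L n / n) atTop ≤ C := by
  have hlim : Tendsto (fun n : ℕ => (C + 1 / (n : ℝ)) / (1 - ε n)) atTop (nhds C) := by
    have h := (tendsto_one_div_atTop_nhds_zero_nat.const_add C).div (hε.const_sub 1) (by norm_num)
    rwa [add_zero, sub_zero, div_one] at h
  have hle : ∀ᶠ n : ℕ in atTop, L n / n ≤ (C + 1 / (n : ℝ)) / (1 - ε n) := by
    filter_upwards [hε.eventually_lt_const one_pos, eventually_gt_atTop 0] with n hεn hn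
    have hn : (0 : ℝ) < n := Nat.cast_pos.2 hn
    rw [div_le_div_iff₀ hn (sub_pos.2 hεn), add_mul, one_div_mul_cancel hn.ne']
    linarith [hbound n]
  calc limsup (fun n => L n / n) atTop
      ≤ limsup (fun n : ℕ => (C + 1 / (n : ℝ)) / (1 - ε n)) atTop :=
        limsup_le_limsup hle (IsCoboundedUnder.of_frequently_ge (a := 0)
          (Frequently.of_forall fun n => div_nonneg (hL n) n.cast_nonneg)) hlim.isBoundedUnder_le
    _ = C := hlim.limsup_eq

theorem covert_watermarking_converse_general {S X : Type*} [Fintype S] [Fintype X] {κ : ℕ → Type*}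
    [∀ n, Fintype (κ n)] {PS : S → ℝ} {PXgS : S → X → ℝ} (hPS : PS ∈ stdSimplex ℝ S)
    (hPXgS : ∀ s, PXgS s ∈ stdSimplex ℝ X) {M : ℕ → ℕ} (hM : ∀ n, 0 < M n)
    {PK : ∀ n, κ n → ℝ} (hPK : ∀ n, PK n ∈ stdSimplex ℝ (κ n))
    {enc : ∀ n, (Fin n → S) → Fin (M n) → κ n → (Fin n → X) → ℝ}
    (henc : ∀ n s m k, enc n s m k ∈ stdSimplex ℝ (Fin n → X))
    (g : ∀ n, (Fin n → X) → κ n → Fin (M n))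
    (herror : Tendsto (fun n => ∑ z, if g n z.2.2.2 z.2.2.1 ≠ z.2.1
      then codeLaw PS (PK n) (enc n) z else 0) atTop (nhds 0))
    (hcovert : Tendsto (fun n => TV (outputLaw PS (PK n) (enc n)) (iidLaw PS PXgS n))
      atTop (nhds 0)) :
    limsup (fun n => logb 2 (M n) / n) atTop ≤ sSup (singleLetterRates PS PXgS) :=
  limsup_div_le_of_one_sub_mul_le
    (fun n => logb_nonneg one_lt_two (by exact_mod_cast hM n))
    (by simpa using herror.add hcovert)
    fun n => one_sub_error_add_TV_mul_logb_le hPS hPXgS (hPK n) (hM n) (henc n) (g n)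

/-- **Converse part of Theorem 1** (covert multi-bit watermarking capacity with
non-causal state).  For any sequence of codes (arbitrary stochastic encoders and
decoders with uniform independent messages and keys) whose error probability and
covertness deviation (maximal total variation to the base product law over the
messages) both vanish, the message rate `limsup (1/n) log₂ |M_n|` is bounded by
`sup { I(U;X) − I(U;S) }` over all finite auxiliary alphabets `U` and conditional
pmfs `P_{U|S}`, `W_{X|U,S}` consistent with the base token law `P_{X|S}`. -/
theorem covert_watermarking_converse
    {S X : Type*} [Fintype S] [Fintype X]
    (PS : S → ℝ) (PXgS : S → X → ℝ)
    (hPS0 : ∀ s, 0 ≤ PS s) (hPS1 : ∑ s, PS s = 1)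
    (hPX0 : ∀ s x, 0 ≤ PXgS s x) (hPX1 : ∀ s, ∑ x, PXgS s x = 1)
    (Mn Kn : ℕ → ℕ) (hM : ∀ n, 0 < Mn n) (hK : ∀ n, 0 < Kn n)
    (enc : ∀ n : ℕ, (Fin n → S) → Fin (Mn n) → Fin (Kn n) → (Fin n → X) → ℝ)
    (g : ∀ n : ℕ, (Fin n → X) → Fin (Kn n) → Fin (Mn n))
    (henc0 : ∀ n sn m k xn, 0 ≤ enc n sn m k xn)
    (henc1 : ∀ n sn m k, ∑ xn, enc n sn m k xn = 1)
    -- the error probabilities δₙ = P(g(Xⁿ,K) ≠ M) vanish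
    (hδ : Tendsto (fun n =>
        ∑ z : (Fin n → S) × Fin (Mn n) × Fin (Kn n) × (Fin n → X),
          if g n z.2.2.2 z.2.2.1 ≠ z.2.1 then
            (∏ t, PS (z.1 t)) * (1 / (Mn n : ℝ)) * (1 / (Kn n : ℝ))
              * enc n z.1 z.2.1 z.2.2.1 z.2.2.2
          else 0) atTop (nhds 0))
    -- the covertness deviations σₙ = maxₘ V(P̃ᵐ_{XⁿSⁿ}, (P_{X|S} P_S)^{⊗n}) vanish
    (hσ : Tendsto (fun n => ⨆ m : Fin (Mn n),
        TV (fun xs : (Fin n → X) × (Fin n → S) =>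
              (∏ t, PS (xs.2 t)) * (1 / (Kn n : ℝ)) * ∑ k, enc n xs.2 m k xs.1)
           (fun xs : (Fin n → X) × (Fin n → S) =>
              ∏ t, PXgS (xs.2 t) (xs.1 t) * PS (xs.2 t))) atTop (nhds 0)) :
    limsup (fun n : ℕ => Real.logb 2 (Mn n : ℝ) / (n : ℝ)) atTop ≤
      sSup { r : ℝ | ∃ (nU : ℕ) (PU : S → Fin nU → ℝ) (W : Fin nU → S → X → ℝ),
        (∀ s u, 0 ≤ PU s u) ∧ (∀ s, ∑ u, PU s u = 1) ∧
        (∀ u s x, 0 ≤ W u s x) ∧ (∀ u s, ∑ x, W u s x = 1) ∧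
        (∀ s, 0 < PS s → ∀ x, ∑ u, PU s u * W u s x = PXgS s x) ∧
        r = mi (fun z : S × Fin nU × X => PS z.1 * PU z.1 z.2.1 * W z.2.1 z.1 z.2.2)
              (fun z => z.2.1) (fun z => z.2.2)
          - mi (fun z : S × Fin nU × X => PS z.1 * PU z.1 z.2.1 * W z.2.1 z.1 z.2.2)
              (fun z => z.2.1) (fun z => z.1) } := by
  simp_rw [mul_sum] at hσ
  exact covert_watermarking_converse_general ⟨hPS0, hPS1⟩ (fun s => ⟨hPX0 s, hPX1 s⟩) hM
    (fun n => uniform_mem_stdSimplex (hK n)) (fun n s m k => ⟨henc0 n s m k, henc1 n s m k⟩) g hδ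
    (squeeze_zero (fun _ => TV_nonneg _ _)
      (fun n => TV_outputLaw_le_iSup_messageLaw (hM n) (iidLaw PS PXgS n)) hσ)
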